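/- Let A, 𝓐 ∈ ℝ^{n×n} be symmetric matrices with nonnegative entries, let D and 𝓓 be diagonal matrices with positive diagonals, set L = D^{−1/2} A D^{−1/2} and 𝓛 = 𝓓^{−1/2} 𝓐 𝓓^{−1/2}, and suppose ‖D^{−1/2} A D^{−1/2}‖₂ ≤ 1. Then, writing ε = max_{1≤i≤n} |D_{ii}/𝓓_{ii} − 1|, one has ‖L − 𝓛‖₂ ≤ ε·(2 + ε) + ‖𝓓^{−1/2}(A − 𝓐)𝓓^{−1/2}‖₂. -/

import Mathlib

open Finset Matrix

/-- The spectral norm (largest singular value) of a real square matrix. -/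
noncomputable def specNorm {n : ℕ} (M : Matrix (Fin n) (Fin n) ℝ) : ℝ :=
  ‖LinearMap.toContinuousLinearMap (Matrix.toEuclideanLin M)‖

section Helpers
open scoped Matrix.Norms.L2Operator

lemma specNorm_helper {n : ℕ} (L M N : Matrix (Fin n) (Fin n) ℝ) (w : Fin n → ℝ) (ε : ℝ)
    (hε : 0 ≤ ε) (hL : specNorm L ≤ 1) (hw : ∀ i, |w i - 1| ≤ ε)
    (hM : M = (L - Matrix.diagonal w * L * Matrix.diagonal w) + N) :
    specNorm M ≤ ε * (2 + ε) + specNorm N := by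
  change ‖L‖ ≤ 1 at hL
  change ‖M‖ ≤ ε * (2 + ε) + ‖N‖
  have h1 : ‖(Matrix.diagonal (fun i => w i - 1) : Matrix (Fin n) (Fin n) ℝ)‖ ≤ ε := by
    rw [Matrix.l2_opNorm_diagonal]
    exact (pi_norm_le_iff_of_nonneg hε).2 hw
  have h2 : ‖(Matrix.diagonal w : Matrix (Fin n) (Fin n) ℝ)‖ ≤ 1 + ε := by
    rw [Matrix.l2_opNorm_diagonal]
    refine (pi_norm_le_iff_of_nonneg (by linarith)).2 fun i => ?_
    have := abs_le.1 (hw i)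
    rw [Real.norm_eq_abs, abs_le]
    constructor <;> linarith
  have hd : (Matrix.diagonal (fun i => w i - 1) : Matrix (Fin n) (Fin n) ℝ)
      = Matrix.diagonal w - 1 := by
    rw [← Matrix.diagonal_one, Matrix.diagonal_sub]
  set W : Matrix (Fin n) (Fin n) ℝ := Matrix.diagonal w
  rw [hd] at h1
  have e : M = N - ((W - 1) * L * W + L * (W - 1)) := by
    rw [hM]; noncomm_ring
  have a1 : ‖(W - 1) * L * W‖ ≤ ε * 1 * (1 + ε) := by
    refine (norm_mul_le _ _).trans ?_
    refine mul_le_mul ((norm_mul_le _ _).trans ?_) h2 (norm_nonneg _) (by linarith)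
    exact mul_le_mul h1 hL (norm_nonneg _) hε
  have a2 : ‖L * (W - 1)‖ ≤ 1 * ε :=
    (norm_mul_le _ _).trans (mul_le_mul hL h1 (norm_nonneg _) zero_le_one)
  have a3 := norm_sub_le N ((W - 1) * L * W + L * (W - 1))
  have a4 := norm_add_le ((W - 1) * L * W) (L * (W - 1))
  rw [e]
  nlinarith

end Helpers

/-- A deterministic perturbation bound: for symmetric nonnegative
`A, 𝓐` and positive diagonal `D, 𝓓`, with `L = D^{-1/2} A D^{-1/2}`,
`𝓛 = 𝓓^{-1/2} 𝓐 𝓓^{-1/2}` and `‖L‖₂ ≤ 1`, one has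
`‖L − 𝓛‖₂ ≤ ε(2 + ε) + ‖𝓓^{-1/2}(A − 𝓐)𝓓^{-1/2}‖₂` where
`ε = max_i |D_{ii}/𝓓_{ii} − 1|`. -/
theorem normalized_matrix_perturbation
    {n : ℕ} (hn : 0 < n)
    (A Ac : Matrix (Fin n) (Fin n) ℝ)
    (hAsymm : A.IsSymm) (hAcsymm : Ac.IsSymm)
    (hAnn : ∀ i j, 0 ≤ A i j) (hAcnn : ∀ i j, 0 ≤ Ac i j)
    (D Dc : Fin n → ℝ) (hDpos : ∀ i, 0 < D i) (hDcpos : ∀ i, 0 < Dc i)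
    (L Lc : Matrix (Fin n) (Fin n) ℝ)
    (hL : L = Matrix.diagonal (fun i => (Real.sqrt (D i))⁻¹) * A *
      Matrix.diagonal (fun i => (Real.sqrt (D i))⁻¹))
    (hLc : Lc = Matrix.diagonal (fun i => (Real.sqrt (Dc i))⁻¹) * Ac *
      Matrix.diagonal (fun i => (Real.sqrt (Dc i))⁻¹))
    (hLnorm : specNorm L ≤ 1)
    (ε : ℝ)
    (hε : ε = Finset.univ.sup' ⟨⟨0, hn⟩, Finset.mem_univ _⟩
      (fun i => |D i / Dc i - 1|)) :
    specNorm (L - Lc) ≤ ε * (2 + ε) +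
      specNorm (Matrix.diagonal (fun i => (Real.sqrt (Dc i))⁻¹) * (A - Ac) *
        Matrix.diagonal (fun i => (Real.sqrt (Dc i))⁻¹)) := by
  have hle : ∀ i, |D i / Dc i - 1| ≤ ε := fun i => by
    rw [hε]
    exact Finset.le_sup' (fun i => |D i / Dc i - 1|) (Finset.mem_univ i)
  have hε0 : 0 ≤ ε := (abs_nonneg _).trans (hle ⟨0, hn⟩)
  refine specNorm_helper L _ _ (fun i => Real.sqrt (D i) / Real.sqrt (Dc i)) ε hε0 hLnorm ?_ ?_
  · intro i
    refine le_trans ?_ (hle i)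
    rw [← Real.sqrt_div (hDpos i).le]
    have hx : 0 ≤ D i / Dc i := (div_pos (hDpos i) (hDcpos i)).le
    have hs := Real.sqrt_nonneg (D i / Dc i)
    have e : D i / Dc i - 1 = (Real.sqrt (D i / Dc i) - 1) * (Real.sqrt (D i / Dc i) + 1) := by
      nlinarith [Real.mul_self_sqrt hx]
    rw [e, abs_mul]
    refine le_mul_of_one_le_right (abs_nonneg _) ?_
    rw [abs_of_nonneg (by linarith)]
    linarith
  · subst hL hLc
    ext i j
    have h1 := (Real.sqrt_pos.2 (hDpos i)).ne'
    have h2 := (Real.sqrt_pos.2 (hDpos j)).ne'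
    have h3 := (Real.sqrt_pos.2 (hDcpos i)).ne'
    have h4 := (Real.sqrt_pos.2 (hDcpos j)).ne'
    simp only [Matrix.sub_apply, Matrix.add_apply, Matrix.mul_diagonal, Matrix.diagonal_mul]
    field_simp
    ring
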